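/- Let s and e be composable, utrace-closed labelled transition systems, let σ ∈ (L_{s∥e}^δ)*, and let q_s, q_s' ∈ Q_s, q_e, q_e' ∈ Q_e. Then (s ∥ e ==σ==> q_s ∥ q_e and s ∥ e ==σ==> q_s' ∥ q_e') if and only if (s ∥ e ==σ==> q_s ∥ q_e' and s ∥ e ==σ==> q_s' ∥ q_e). -/

import Mathlib

/-- Labels extended with the quiescence label `δ`. -/
inductive ELabel (Lab : Type) : Type
  | lab : Lab → ELabel Lab
  | delta : ELabel Lab

namespace ELabel

/-- Membership of an extended label in `𝓛^δ = 𝓛 ∪ {δ}`. -/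
def inL {Lab : Type} (Ls : Set Lab) : ELabel Lab → Prop
  | lab ℓ => ℓ ∈ Ls
  | delta => True

end ELabel

/-- A trace lies in `(𝓛^δ)*`. -/
def TraceIn {Lab : Type} (Ls : Set Lab) (σ : List (ELabel Lab)) : Prop :=
  ∀ x ∈ σ, ELabel.inL Ls x

/-- A labelled transition system.  `T q none q'` is an internal `τ`-step,
`T q (some ℓ) q'` is a step labelled `ℓ`. -/
structure LTS (Q : Type) (Lab : Type) where
  I : Set Lab
  U : Set Lab
  T : Q → Option Lab → Q → Prop
  q0 : Q

namespace LTS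

variable {Q Lab : Type}

/-- The label set `L = I ∪ U`. -/
def L (M : LTS Q Lab) : Set Lab := M.I ∪ M.U

/-- Standing assumptions on all LTSs: countable, disjoint input/output label
sets, transitions labelled within `L`, strong convergence (no infinite
`τ`-sequences), and image-finiteness. -/
def WellFormed (M : LTS Q Lab) : Prop :=
  M.I.Countable ∧ M.U.Countable ∧ Disjoint M.I M.U ∧
  (∀ q ℓ q', M.T q (some ℓ) q' → ℓ ∈ M.L) ∧
  (¬ ∃ f : ℕ → Q, ∀ n, M.T (f n) none (f (n + 1))) ∧
  (∀ q a, {q' | M.T q a q'}.Finite)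

/-- A state is quiescent if neither an output nor `τ` is enabled in it. -/
def Quiescent (M : LTS Q Lab) (q : Q) : Prop :=
  (∀ x ∈ M.U, ∀ q', ¬ M.T q (some x) q') ∧ ∀ q', ¬ M.T q none q'

/-- A single visible step `q --x--> q'` for `x ∈ L^δ`, where the quiescence
label `δ` gives a self-loop at quiescent states. -/
def VStep (M : LTS Q Lab) (q : Q) : ELabel Lab → Q → Prop
  | .lab ℓ, q' => M.T q (some ℓ) q'
  | .delta, q' => q' = q ∧ M.Quiescent q

/-- Zero or more `τ`-steps: `q ==ε==> q'`. -/
def Eps (M : LTS Q Lab) : Q → Q → Prop :=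
  Relation.ReflTransGen fun a b => M.T a none b

/-- Weak transition `q ==σ==> q'` for `σ ∈ (L^δ)*`. -/
inductive W (M : LTS Q Lab) : Q → List (ELabel Lab) → Q → Prop
  | nil {q q' : Q} : M.Eps q q' → W M q [] q'
  | snoc {q q1 q2 q' : Q} {σ : List (ELabel Lab)} {x : ELabel Lab} :
      W M q σ q1 → M.VStep q1 x q2 → M.Eps q2 q' → W M q (σ ++ [x]) q'

/-- `X after σ`, for a set of states `X`. -/
def afterSet (M : LTS Q Lab) (X : Set Q) (σ : List (ELabel Lab)) : Set Q :=
  {q' | ∃ q ∈ X, M.W q σ q'}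

/-- `M after σ`, from the initial state. -/
def after (M : LTS Q Lab) (σ : List (ELabel Lab)) : Set Q :=
  {q' | M.W M.q0 σ q'}

/-- The predicate underlying `out(q) ⊆ U ∪ {δ}`. -/
def outLabel (M : LTS Q Lab) (q : Q) : ELabel Lab → Prop
  | .lab ℓ => ℓ ∈ M.U ∧ ∃ q', M.T q (some ℓ) q'
  | .delta => M.Quiescent q

/-- `out(q)`. -/
def outq (M : LTS Q Lab) (q : Q) : Set (ELabel Lab) :=
  {x | M.outLabel q x}

/-- `in(q) = {ℓ ∈ I | q ==ℓ==>}`. -/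
def inq (M : LTS Q Lab) (q : Q) : Set Lab :=
  {ℓ | ℓ ∈ M.I ∧ ∃ q', M.W q [ELabel.lab ℓ] q'}

/-- `out(X) = ⋃_{q ∈ X} out(q)`. -/
def outSet (M : LTS Q Lab) (X : Set Q) : Set (ELabel Lab) :=
  ⋃ q ∈ X, M.outq q

/-- `in(X) = ⋂_{q ∈ X} in(q)`. -/
def inSet (M : LTS Q Lab) (X : Set Q) : Set Lab :=
  ⋂ q ∈ X, M.inq q

/-- Input-enabledness: `M` is an IOTS. -/
def InputEnabled (M : LTS Q Lab) : Prop :=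
  ∀ q, ∀ ℓ ∈ M.I, ∃ q', M.W q [ELabel.lab ℓ] q'

/-- `Utraces(M)`. -/
def Utraces (M : LTS Q Lab) : Set (List (ELabel Lab)) :=
  {σ | TraceIn M.L σ ∧ (∃ q', M.W M.q0 σ q') ∧
    ∀ σ1 ℓ σ2, σ = σ1 ++ ELabel.lab ℓ :: σ2 → ℓ ∈ M.I →
      ∀ q, M.W M.q0 σ1 q → ∃ q', M.W q [ELabel.lab ℓ] q'}

/-- An LTS is utrace-closed when every trace over `(L^δ)*` that it can
perform is a utrace. -/
def UtraceClosed (M : LTS Q Lab) : Prop :=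
  ∀ σ : List (ELabel Lab), TraceIn M.L σ → (∃ q', M.W M.q0 σ q') → σ ∈ M.Utraces

end LTS

/-- `i uioco s`. -/
def Uioco {Qi Qs Lab : Type} (i : LTS Qi Lab) (s : LTS Qs Lab) : Prop :=
  ∀ σ ∈ s.Utraces, i.outSet (i.after σ) ⊆ s.outSet (s.after σ)

/-- Composability: disjoint output label sets. -/
def Composable {Qs Qe Lab : Type} (s : LTS Qs Lab) (e : LTS Qe Lab) : Prop :=
  s.U ∩ e.U = ∅

/-- Parallel composition `s ∥ e`. -/
def par {Qs Qe Lab : Type} (s : LTS Qs Lab) (e : LTS Qe Lab) : LTS (Qs × Qe) Lab where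
  I := (s.I \ e.U) ∪ (e.I \ s.U)
  U := s.U ∪ e.U
  T := fun p a p' =>
    match a with
    | none =>
        (s.T p.1 none p'.1 ∧ p'.2 = p.2) ∨ (e.T p.2 none p'.2 ∧ p'.1 = p.1)
    | some ℓ =>
        (ℓ ∈ s.L ∧ ℓ ∉ e.L ∧ s.T p.1 (some ℓ) p'.1 ∧ p'.2 = p.2) ∨
        (ℓ ∈ e.L ∧ ℓ ∉ s.L ∧ e.T p.2 (some ℓ) p'.2 ∧ p'.1 = p.1) ∨
        (ℓ ∈ s.L ∧ ℓ ∈ e.L ∧ s.T p.1 (some ℓ) p'.1 ∧ e.T p.2 (some ℓ) p'.2)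
  q0 := (s.q0, e.q0)

/-- `s accepts e`: along utraces of `s ∥ e`, every output of `e` that is an
input of `s` is (weakly) enabled in `s`. -/
def Accepts {Qs Qe Lab : Type} (s : LTS Qs Lab) (e : LTS Qe Lab) : Prop :=
  ∀ σ ∈ (par s e).Utraces, ∀ qs qe, (par s e).W (par s e).q0 σ (qs, qe) →
    ∀ ℓ, ELabel.lab ℓ ∈ e.outq qe → ℓ ∈ s.I → ℓ ∈ s.inq qs

/-- `s mutually accepts e`. -/
def MutuallyAccepts {Qs Qe Lab : Type} (s : LTS Qs Lab) (e : LTS Qe Lab) : Prop :=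
  Accepts s e ∧ Accepts e s

/-- `R` is an ecosim for `s` and `e`. -/
def IsEcosim {Qs Qe Lab : Type} (s : LTS Qs Lab) (e : LTS Qe Lab)
    (R : Set (Set Qs × Set Qe)) : Prop :=
  (s.after [], e.after []) ∈ R ∧
  ∀ Xs Xe, (Xs, Xe) ∈ R →
    (∀ ℓ, ELabel.lab ℓ ∈ e.outSet Xe → ℓ ∈ s.I →
      ℓ ∈ s.inSet Xs ∧
        (s.afterSet Xs [ELabel.lab ℓ], e.afterSet Xe [ELabel.lab ℓ]) ∈ R) ∧
    (∀ ℓ, ELabel.lab ℓ ∈ s.outSet Xs → ℓ ∈ e.I →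
      ℓ ∈ e.inSet Xe ∧
        (s.afterSet Xs [ELabel.lab ℓ], e.afterSet Xe [ELabel.lab ℓ]) ∈ R) ∧
    (∀ ℓ, (ELabel.lab ℓ ∈ e.outSet Xe ∨ ℓ ∈ e.inSet Xe) → ℓ ∉ s.L →
      (Xs, e.afterSet Xe [ELabel.lab ℓ]) ∈ R) ∧
    (∀ ℓ, (ELabel.lab ℓ ∈ s.outSet Xs ∨ ℓ ∈ s.inSet Xs) → ℓ ∉ e.L →
      (s.afterSet Xs [ELabel.lab ℓ], Xe) ∈ R) ∧
    (∀ ℓ, ℓ ∈ s.inSet Xs → ℓ ∈ e.inSet Xe →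
      (s.afterSet Xs [ELabel.lab ℓ], e.afterSet Xe [ELabel.lab ℓ]) ∈ R) ∧
    (ELabel.delta ∈ s.outSet Xs → ELabel.delta ∈ e.outSet Xe →
      (s.afterSet Xs [ELabel.delta], e.afterSet Xe [ELabel.delta]) ∈ R)

/-- `s eco e`: there exists an ecosim for `s` and `e`. -/
def Eco {Qs Qe Lab : Type} (s : LTS Qs Lab) (e : LTS Qe Lab) : Prop :=
  ∃ R, IsEcosim s e R

/-- `R_U(s,e)`: the smallest relation closed under the given rules. -/
inductive RU {Qs Qe Lab : Type} (s : LTS Qs Lab) (e : LTS Qe Lab) :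
    Set Qs → Set Qe → Prop
  | base : RU s e (s.after []) (e.after [])
  | syncOutE {Xs : Set Qs} {Xe : Set Qe} (ℓ : Lab) :
      RU s e Xs Xe → ELabel.lab ℓ ∈ e.outSet Xe → ℓ ∈ s.I →
      RU s e (s.afterSet Xs [ELabel.lab ℓ]) (e.afterSet Xe [ELabel.lab ℓ])
  | syncOutS {Xs : Set Qs} {Xe : Set Qe} (ℓ : Lab) :
      RU s e Xs Xe → ELabel.lab ℓ ∈ s.outSet Xs → ℓ ∈ e.I →
      RU s e (s.afterSet Xs [ELabel.lab ℓ]) (e.afterSet Xe [ELabel.lab ℓ])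
  | internalE {Xs : Set Qs} {Xe : Set Qe} (ℓ : Lab) :
      RU s e Xs Xe → (ELabel.lab ℓ ∈ e.outSet Xe ∨ ℓ ∈ e.inSet Xe) → ℓ ∉ s.L →
      RU s e Xs (e.afterSet Xe [ELabel.lab ℓ])
  | internalS {Xs : Set Qs} {Xe : Set Qe} (ℓ : Lab) :
      RU s e Xs Xe → (ELabel.lab ℓ ∈ s.outSet Xs ∨ ℓ ∈ s.inSet Xs) → ℓ ∉ e.L →
      RU s e (s.afterSet Xs [ELabel.lab ℓ]) Xe
  | syncIn {Xs : Set Qs} {Xe : Set Qe} (ℓ : Lab) :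
      RU s e Xs Xe → ℓ ∈ s.inSet Xs → ℓ ∈ e.inSet Xe →
      RU s e (s.afterSet Xs [ELabel.lab ℓ]) (e.afterSet Xe [ELabel.lab ℓ])
  | qdelta {Xs : Set Qs} {Xe : Set Qe} :
      RU s e Xs Xe → ELabel.delta ∈ s.outSet Xs → ELabel.delta ∈ e.outSet Xe →
      RU s e (s.afterSet Xs [ELabel.delta]) (e.afterSet Xe [ELabel.delta])

open Classical in
/-- Projection `σ↾𝓛^δ` of a trace onto an (extended) label set: keeps `δ`
and the labels in `Ls`, removes all other labels. -/
noncomputable def projD {Lab : Type} (σ : List (ELabel Lab)) (Ls : Set Lab) :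
    List (ELabel Lab) :=
  σ.filter fun x => decide (ELabel.inL Ls x)

open Classical in
/-- Projection `σ↾𝓛` of a trace of plain labels onto a label set. -/
noncomputable def projL {Lab : Type} (σ : List Lab) (Ls : Set Lab) : List Lab :=
  σ.filter fun ℓ => decide (ℓ ∈ Ls)

open Classical in
/-- Substitution `σ[θ/δ]` of the label `θ` by the quiescence label `δ`. -/
noncomputable def substTheta {Lab : Type} (θ : Lab) (σ : List Lab) :
    List (ELabel Lab) :=
  σ.map fun ℓ => if ℓ = θ then ELabel.delta else ELabel.lab ℓ

/-- `⟨X⟩`: componentwise collection of a set of pairs of states. -/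
def collect {Qs Qe : Type} (X : Set (Qs × Qe)) : Set Qs × Set Qe :=
  (Prod.fst '' X, Prod.snd '' X)

/-- `q_s accepts q_e over σ`. -/
def AcceptsOver {Qs Qe Lab : Type} (s : LTS Qs Lab) (e : LTS Qe Lab)
    (qs : Qs) (qe : Qe) (σ : List (ELabel Lab)) : Prop :=
  ∀ σ1 σ2 : List (ELabel Lab), σ1 ++ σ2 = σ →
    ∀ (qs' : Qs) (qe' : Qe), (par s e).W (qs, qe) σ1 (qs', qe') →
      ∀ ℓ, ELabel.lab ℓ ∈ e.outq qe' → ℓ ∈ s.I → ℓ ∈ s.inq qs' ∧ ℓ ∈ e.U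

/-- `q_s mutually accepts q_e over σ`. -/
def MutuallyAcceptsOver {Qs Qe Lab : Type} (s : LTS Qs Lab) (e : LTS Qe Lab)
    (qs : Qs) (qe : Qe) (σ : List (ELabel Lab)) : Prop :=
  AcceptsOver s e qs qe σ ∧ AcceptsOver e s qe qs σ

/-- A test case: a quasi-finite tree-shaped LTS without `τ`-transitions, with
terminal states `pass` and `fail` carrying input self-loops, a special
quiescence-observation input `θ`, at most one output transition per state,
and receptive to all inputs other than `θ`. -/
structure TestCase (Qt Lab : Type) extends LTS Qt Lab where
  passS : Qt
  failS : Qt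
  theta : Lab
  theta_input : theta ∈ I
  no_tau : ∀ q q', ¬ T q none q'
  tree : ∀ q, q ≠ q0 → q ≠ passS → q ≠ failS →
    ∃! p : Qt × Option Lab, T p.1 p.2 q
  pass_loops : ∀ ℓ ∈ I, T passS (some ℓ) passS
  pass_terminal : ∀ a q', T passS a q' → q' = passS ∧ ∃ ℓ ∈ I, a = some ℓ
  fail_loops : ∀ ℓ ∈ I, T failS (some ℓ) failS
  fail_terminal : ∀ a q', T failS a q' → q' = failS ∧ ∃ ℓ ∈ I, a = some ℓ
  one_output : ∀ q ℓ ℓ' q' q'', ℓ ∈ U → ℓ' ∈ U →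
    T q (some ℓ) q' → T q (some ℓ') q'' → ℓ = ℓ' ∧ q' = q''
  receptive : ∀ q, ∀ ℓ ∈ I, ℓ ≠ theta → ∃ q', T q (some ℓ) q'

/-- Test execution `t ⫿ i` of a test case `t` with an implementation `i`. -/
def testExec {Qt Qi Lab : Type} (t : TestCase Qt Lab) (i : LTS Qi Lab) :
    LTS (Qt × Qi) Lab where
  I := ∅
  U := i.U ∪ (t.toLTS.L \ {t.theta})
  T := fun p a p' =>
    match a with
    | none => i.T p.2 none p'.2 ∧ p'.1 = p.1
    | some ℓ =>
        (ℓ ∈ i.L ∧ ℓ ∉ t.toLTS.L ∧ i.T p.2 (some ℓ) p'.2 ∧ p'.1 = p.1) ∨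
        (ℓ ∈ t.toLTS.L ∧ ℓ ∉ i.L ∧ ℓ ≠ t.theta ∧ t.T p.1 (some ℓ) p'.1 ∧ p'.2 = p.2) ∨
        (ℓ ∈ i.L ∧ ℓ ∈ t.toLTS.L ∧ t.T p.1 (some ℓ) p'.1 ∧ i.T p.2 (some ℓ) p'.2) ∨
        (ℓ = t.theta ∧ t.T p.1 (some ℓ) p'.1 ∧ p'.2 = p.2 ∧ i.Quiescent p.2)
  q0 := (t.q0, i.q0)

/-!
The set of states of `s ∥ e` reached by `σ` is a rectangle, by induction on `σ`. Internal and
labelled moves of `s ∥ e` are combinations of independent local moves of `s` and `e`, so for these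
the claim is immediate. The only global condition is quiescence: a state `q_s ∥ q_e'` mixed from two
quiescent states `q_s ∥ q_e` and `q_s' ∥ q_e'` could offer an output of, say, `s`, on which `q_e`
refuses to synchronise but `q_e'` does not. This label is an input of `e`, while `q_e` and `q_e'`
are `τ`-free and reached by the same trace of `e` (`σ` with all `δ` and all labels foreign to `e`
removed), so utrace-closedness makes `q_e` accept it too.
-/

open Classical in
/-- Projection of a trace onto a plain label set. Unlike `projD` it also removes `δ`, because
quiescence of a composition does not imply quiescence of its components. -/
noncomputable def projLab {Lab : Type} (Ls : Set Lab) (σ : List (ELabel Lab)) :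
    List (ELabel Lab) :=
  σ.filter fun x => decide (∃ ℓ ∈ Ls, x = ELabel.lab ℓ)

section projLab

variable {Lab : Type} {Ls : Set Lab} {σ : List (ELabel Lab)} {ℓ : Lab}

theorem traceIn_projLab (Ls : Set Lab) (σ : List (ELabel Lab)) : TraceIn Ls (projLab Ls σ) := by
  intro x hx
  simp only [projLab, List.mem_filter, decide_eq_true_eq] at hx
  obtain ⟨-, ℓ, hℓ, rfl⟩ := hx
  exact hℓ

theorem projLab_append_delta : projLab Ls (σ ++ [.delta]) = projLab Ls σ := by
  simp [projLab]

theorem projLab_append_lab_of_mem (hℓ : ℓ ∈ Ls) :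
    projLab Ls (σ ++ [.lab ℓ]) = projLab Ls σ ++ [.lab ℓ] := by
  simp [projLab, hℓ]

theorem projLab_append_lab_of_notMem (hℓ : ℓ ∉ Ls) :
    projLab Ls (σ ++ [.lab ℓ]) = projLab Ls σ := by
  simp [projLab, hℓ]

end projLab

namespace LTS

variable {Q Lab : Type} {M : LTS Q Lab} {p p' q q' q₁ q₂ : Q} {σ : List (ELabel Lab)}
  {x : ELabel Lab} {ℓ : Lab}

/-- A state is stable if no `τ`-step is enabled in it; this is the second half of quiescence. -/
def Stable (M : LTS Q Lab) (q : Q) : Prop :=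
  ∀ q', ¬ M.T q none q'

/-- The contribution of `M` to a step labelled `ℓ` of a composition: `M` performs `ℓ` if it knows
this label, and stays put otherwise. -/
def LocalStep (M : LTS Q Lab) (q : Q) (ℓ : Lab) (q' : Q) : Prop :=
  (ℓ ∈ M.L ∧ M.T q (some ℓ) q') ∨ (ℓ ∉ M.L ∧ q' = q)

theorem Stable.eps_iff (hq : M.Stable q) : M.Eps q q' ↔ q' = q :=
  Relation.reflTransGen_iff_eq hq

theorem W_nil_iff : M.W q [] q' ↔ M.Eps q q' := by
  refine ⟨fun h => ?_, .nil⟩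
  generalize hσ : ([] : List (ELabel Lab)) = σ at h
  cases h with
  | nil hε => exact hε
  | snoc => simp at hσ

theorem W_append_singleton_iff :
    M.W q (σ ++ [x]) q' ↔ ∃ q₁ q₂, M.W q σ q₁ ∧ M.VStep q₁ x q₂ ∧ M.Eps q₂ q' := by
  refine ⟨fun h => ?_, fun ⟨_, _, hσ, hx, hε⟩ => .snoc hσ hx hε⟩
  generalize hρ : σ ++ [x] = ρ at h
  cases h with
  | nil => simp at hρ
  | snoc hσ hx hε =>
    obtain ⟨rfl, hxx⟩ := List.append_inj' hρ rfl
    obtain rfl := List.singleton_inj.1 hxx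
    exact ⟨_, _, hσ, hx, hε⟩

theorem W.trans_eps (h : M.W q σ q₁) (hε : M.Eps q₁ q') : M.W q σ q' := by
  cases h with
  | nil hε₀ => exact .nil (hε₀.trans hε)
  | snoc hσ hx hε₀ => exact .snoc hσ hx (hε₀.trans hε)

theorem Stable.exists_T_of_W_singleton (hq : M.Stable q) (h : M.W q [.lab ℓ] q') :
    ∃ r, M.T q (some ℓ) r := by
  obtain ⟨q₁, r, hnil, hstep, -⟩ := W_append_singleton_iff (σ := []).1 h
  obtain rfl := hq.eps_iff.1 (W_nil_iff.1 hnil)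
  exact ⟨r, hstep⟩

theorem W.projLab_append_of_localStep (h : M.W q (projLab M.L σ) q₁) (hℓ : M.LocalStep q₁ ℓ q₂) :
    M.W q (projLab M.L (σ ++ [.lab ℓ])) q₂ := by
  rcases hℓ with ⟨hmem, hT⟩ | ⟨hnotMem, rfl⟩
  · rw [projLab_append_lab_of_mem hmem]
    exact .snoc h hT .refl
  · rwa [projLab_append_lab_of_notMem hnotMem]

theorem UtraceClosed.exists_W_input (hM : M.UtraceClosed) (hσ : TraceIn M.L σ) (hℓ : ℓ ∈ M.I)
    (hp : M.W M.q0 σ p) (hp' : M.W M.q0 σ p') (hT : M.T p' (some ℓ) q') :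
    ∃ r, M.W p [.lab ℓ] r := by
  have htrace : TraceIn M.L (σ ++ [.lab ℓ]) := by
    simpa [TraceIn, or_imp, forall_and, ELabel.inL] using ⟨hσ, Or.inl hℓ⟩
  have hutrace := hM (σ ++ [.lab ℓ]) htrace ⟨q', .snoc hp' (x := .lab ℓ) hT .refl⟩
  exact hutrace.2.2 σ ℓ [] rfl hℓ p hp

theorem UtraceClosed.exists_localStep (hM : M.UtraceClosed) (hσ : TraceIn M.L σ) (hℓ : ℓ ∉ M.U)
    (hp : M.W M.q0 σ p) (hp' : M.W M.q0 σ p') (hstable : M.Stable p)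
    (hstep : M.LocalStep p' ℓ q') : ∃ r, M.LocalStep p ℓ r := by
  rcases hstep with ⟨hmem, hT⟩ | ⟨hnotMem, -⟩
  · obtain ⟨r, hr⟩ := hM.exists_W_input hσ (hmem.resolve_right hℓ) hp hp' hT
    obtain ⟨r', hr'⟩ := hstable.exists_T_of_W_singleton hr
    exact ⟨r', .inl ⟨hmem, hr'⟩⟩
  · exact ⟨p, .inr ⟨hnotMem, rfl⟩⟩

end LTS

section par

open Relation

variable {Qs Qe Lab : Type} {s : LTS Qs Lab} {e : LTS Qe Lab} {p p' : Qs × Qe}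
  {qs qs' : Qs} {qe qe' : Qe} {σ : List (ELabel Lab)} {ℓ : Lab}

theorem par_T_some_iff :
    (par s e).T p (some ℓ) p' ↔
      (ℓ ∈ s.L ∨ ℓ ∈ e.L) ∧ s.LocalStep p.1 ℓ p'.1 ∧ e.LocalStep p.2 ℓ p'.2 := by
  simp only [par, LTS.LocalStep]
  tauto

theorem par_stable_iff : (par s e).Stable p ↔ s.Stable p.1 ∧ e.Stable p.2 := by
  constructor
  · intro h
    exact ⟨fun r hr => h (r, p.2) (.inl ⟨hr, rfl⟩), fun r hr => h (p.1, r) (.inr ⟨hr, rfl⟩)⟩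
  · rintro ⟨hs, he⟩ r (⟨hr, -⟩ | ⟨hr, -⟩)
    exacts [hs _ hr, he _ hr]

theorem par_eps_iff : (par s e).Eps p p' ↔ s.Eps p.1 p'.1 ∧ e.Eps p.2 p'.2 := by
  constructor
  · intro h
    induction h with
    | refl => exact ⟨.refl, .refl⟩
    | tail _ hτ ih =>
      rcases hτ with ⟨hτ, hfix⟩ | ⟨hτ, hfix⟩
      · exact ⟨ih.1.tail hτ, hfix ▸ ih.2⟩
      · exact ⟨hfix ▸ ih.1, ih.2.tail hτ⟩
  · rintro ⟨hs, he⟩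
    have hleft : (par s e).Eps (p.1, p.2) (p'.1, p.2) :=
      ReflTransGen.lift (·, p.2) (fun _ _ hτ => .inl ⟨hτ, rfl⟩) _ _ hs
    have hright : (par s e).Eps (p'.1, p.2) (p'.1, p'.2) :=
      ReflTransGen.lift (p'.1, ·) (fun _ _ hτ => .inr ⟨hτ, rfl⟩) _ _ he
    exact hleft.trans hright

theorem LTS.W.par_projLab (h : (par s e).W p σ p') :
    s.W p.1 (projLab s.L σ) p'.1 ∧ e.W p.2 (projLab e.L σ) p'.2 := by
  induction h with
  | nil hε =>
    obtain ⟨hs, he⟩ := par_eps_iff.1 hε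
    exact ⟨.nil hs, .nil he⟩
  | @snoc _ _ _ _ x _ hx hε ih =>
    obtain ⟨hs, he⟩ := par_eps_iff.1 hε
    cases x with
    | delta =>
      obtain ⟨rfl, -⟩ := hx
      simp only [projLab_append_delta]
      exact ⟨ih.1.trans_eps hs, ih.2.trans_eps he⟩
    | lab ℓ =>
      obtain ⟨-, hxs, hxe⟩ := par_T_some_iff.1 hx
      exact ⟨(ih.1.projLab_append_of_localStep hxs).trans_eps hs,
        (ih.2.projLab_append_of_localStep hxe).trans_eps he⟩

theorem LTS.Quiescent.par_cross (hcomp : Composable s e)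
    (hs : ∀ ℓ ∉ s.U, ∀ r, s.LocalStep qs ℓ r → ∃ r', s.LocalStep qs' ℓ r')
    (he : ∀ ℓ ∉ e.U, ∀ r, e.LocalStep qe' ℓ r → ∃ r', e.LocalStep qe ℓ r')
    (hq : (par s e).Quiescent (qs, qe)) (hq' : (par s e).Quiescent (qs', qe')) :
    (par s e).Quiescent (qs, qe') := by
  have hdisj : Disjoint s.U e.U := Set.disjoint_iff_inter_eq_empty.2 hcomp
  have hstable : (par s e).Stable (qs, qe') :=
    par_stable_iff.2 ⟨(par_stable_iff.1 hq.2).1, (par_stable_iff.1 hq'.2).2⟩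
  refine ⟨fun ℓ hℓ r hr => ?_, hstable⟩
  obtain ⟨hL, hrs, hre⟩ := par_T_some_iff.1 hr
  rcases hℓ with hsU | heU
  · obtain ⟨r', hr'⟩ := he ℓ (hdisj.notMem_of_mem_left hsU) _ hre
    exact hq.1 ℓ (.inl hsU) (r.1, r') (par_T_some_iff.2 ⟨hL, hrs, hr'⟩)
  · obtain ⟨r', hr'⟩ := hs ℓ (hdisj.notMem_of_mem_right heU) _ hrs
    exact hq'.1 ℓ (.inr heU) (r', r.2) (par_T_some_iff.2 ⟨hL, hr', hre⟩)

theorem LTS.Quiescent.par_cross_of_W (hcomp : Composable s e)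
    (hsclosed : s.UtraceClosed) (heclosed : e.UtraceClosed)
    (h : (par s e).W (par s e).q0 σ (qs, qe)) (h' : (par s e).W (par s e).q0 σ (qs', qe'))
    (hq : (par s e).Quiescent (qs, qe)) (hq' : (par s e).Quiescent (qs', qe')) :
    (par s e).Quiescent (qs, qe') := by
  obtain ⟨hs, he⟩ := h.par_projLab
  obtain ⟨hs', he'⟩ := h'.par_projLab
  refine hq.par_cross hcomp (fun ℓ hℓ r hr => ?_) (fun ℓ hℓ r hr => ?_) hq'
  · exact hsclosed.exists_localStep (traceIn_projLab _ _) hℓ hs' hs (par_stable_iff.1 hq'.2).1 hr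
  · exact heclosed.exists_localStep (traceIn_projLab _ _) hℓ he he' (par_stable_iff.1 hq.2).2 hr

theorem LTS.W.par_cross (hcomp : Composable s e)
    (hsclosed : s.UtraceClosed) (heclosed : e.UtraceClosed)
    (h : (par s e).W (par s e).q0 σ (qs, qe)) (h' : (par s e).W (par s e).q0 σ (qs', qe')) :
    (par s e).W (par s e).q0 σ (qs, qe') := by
  induction σ using List.reverseRecOn generalizing qs qs' qe qe' with
  | nil =>
    rw [LTS.W_nil_iff, par_eps_iff] at h h' ⊢
    exact ⟨h.1, h'.2⟩
  | append_singleton σ x ih =>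
    obtain ⟨⟨ps, pe⟩, ⟨rs, re⟩, hσ, hx, hε⟩ := LTS.W_append_singleton_iff.1 h
    obtain ⟨⟨ps', pe'⟩, ⟨rs', re'⟩, hσ', hx', hε'⟩ := LTS.W_append_singleton_iff.1 h'
    have hxcross : (par s e).VStep (ps, pe') x (rs, re') := by
      cases x with
      | lab ℓ =>
        obtain ⟨hL, hs, -⟩ := par_T_some_iff.1 hx
        obtain ⟨-, -, he'⟩ := par_T_some_iff.1 hx'
        exact par_T_some_iff.2 ⟨hL, hs, he'⟩
      | delta =>
        obtain ⟨⟨⟩, hq⟩ := hx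
        obtain ⟨⟨⟩, hq'⟩ := hx'
        exact ⟨rfl, hq.par_cross_of_W hcomp hsclosed heclosed hσ hσ' hq'⟩
    exact .snoc (ih hσ hσ') hxcross (par_eps_iff.2 ⟨(par_eps_iff.1 hε).1, (par_eps_iff.1 hε').2⟩)

end par

theorem utrace_closed_implies_cartesian_closed_general {Qs Qe Lab : Type}
    (s : LTS Qs Lab) (e : LTS Qe Lab) (hcomp : Composable s e)
    (hsclosed : s.UtraceClosed) (heclosed : e.UtraceClosed)
    (σ : List (ELabel Lab)) (qs qs' : Qs) (qe qe' : Qe) :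
    ((par s e).W (par s e).q0 σ (qs, qe) ∧
        (par s e).W (par s e).q0 σ (qs', qe')) ↔
      ((par s e).W (par s e).q0 σ (qs, qe') ∧
        (par s e).W (par s e).q0 σ (qs', qe)) := by
  constructor <;> rintro ⟨h, h'⟩ <;>
    exact ⟨h.par_cross hcomp hsclosed heclosed h', h'.par_cross hcomp hsclosed heclosed h⟩

/-- for composable utrace-closed `s`, `e` and
`σ ∈ (L_{s∥e}^δ)*`, reachability of both `q_s ∥ q_e` and `q_s' ∥ q_e'` along
`σ` is equivalent to reachability of both cross pairs. -/
theorem utrace_closed_implies_cartesian_closed {Qs Qe Lab : Type}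
    (s : LTS Qs Lab) (e : LTS Qe Lab)
    (hs : s.WellFormed) (he : e.WellFormed)
    (hcomp : Composable s e)
    (hsclosed : s.UtraceClosed) (heclosed : e.UtraceClosed)
    (σ : List (ELabel Lab)) (hσ : TraceIn (par s e).L σ)
    (qs qs' : Qs) (qe qe' : Qe) :
    ((par s e).W (par s e).q0 σ (qs, qe) ∧
        (par s e).W (par s e).q0 σ (qs', qe')) ↔
      ((par s e).W (par s e).q0 σ (qs, qe') ∧
        (par s e).W (par s e).q0 σ (qs', qe)) := by
  exact utrace_closed_implies_cartesian_closed_general s e hcomp hsclosed heclosed σ qs qs' qe qe'
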